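/- Let S₀ ⊂ ℤ² be a shape (a finite nonempty subset of ℤ² that is connected with respect to grid adjacency), let v ∈ ℤ² be a nonzero vector, and set S₁ = S₀ + v and S₂ = S₁ + v. Let C be a connected component of S₂ \ S₁ (with respect to grid adjacency), let p ∈ C ∩ S₀, and let n be the smallest positive integer such that p + n·v ∉ S₁ (such n exists since S₁ is finite). Then p + n·v ∈ S₂ \ S₁ and p + n·v does not belong to C, i.e., p + n·v lies in a connected component of S₂ \ S₁ different from C. -/

import Mathlib

/-- Grid adjacency on ℤ²: two points are adjacent iff their ℓ¹-distance is 1. -/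
def GridAdj (p q : ℤ × ℤ) : Prop := |p.1 - q.1| + |p.2 - q.2| = 1

/-- A subset of ℤ² is grid-connected if any two of its points are joined by a
path of adjacent points staying inside the set. -/
def GridConnected (S : Set (ℤ × ℤ)) : Prop :=
  ∀ p ∈ S, ∀ q ∈ S,
    Relation.ReflTransGen (fun a b => GridAdj a b ∧ a ∈ S ∧ b ∈ S) p q

/-- `C` is a connected component of `S`: a maximal nonempty connected subset. -/
def IsGridComponent (S C : Set (ℤ × ℤ)) : Prop :=
  C ⊆ S ∧ C.Nonempty ∧ GridConnected C ∧
    ∀ D : Set (ℤ × ℤ), C ⊆ D → D ⊆ S → GridConnected D → D = C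

/-- Translate of a subset of ℤ² by a vector. -/
def setTranslate (S : Set (ℤ × ℤ)) (v : ℤ × ℤ) : Set (ℤ × ℤ) := (· + v) '' S

/-!
The heart of the matter is a universal chord theorem on the grid: a connected set `C` containing
`p` and `p + k • v` with `k ≥ 1` contains two points that differ by `v`. This is impossible inside
`(S + v) \ S`.

Replacing `v` by `-v` if necessary, let `v` be lexicographically positive. Continue a walk in `C`
from `p` to `p + k • v` periodically, and look at one period of it, started at an arbitrary time and
translated so as to run from `-v` to `(k - 1) • v`. If no two points at most a period apart differ
by `v`, these translated walks avoid the origin. Advancing the starting time by one step moves the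
walk across unit cells without passing over the origin, so the signed number of crossings with the
upward vertical ray from the origin does not change. But a walk started at a point that is highest
relative to the direction `v` stays below the line `ℝv` and has crossing number `0`, while one
started at a lowest point stays above it and has crossing number `1`. Hence some points of the
periodic walk differ by `v`; either this is the desired chord, or it wraps around the period and
gives two points of `C` that differ by `(k - 1) • v`, so that induction on `k` applies.
-/

section GridAdj

variable {x y : ℤ × ℤ}

lemma gridAdj_iff : GridAdj x y ↔
    y = (x.1 + 1, x.2) ∨ y = (x.1 - 1, x.2) ∨ y = (x.1, x.2 + 1) ∨ y = (x.1, x.2 - 1) := by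
  simp only [GridAdj, Prod.ext_iff]
  rcases abs_cases (x.1 - y.1) with h₁ | h₁ <;> rcases abs_cases (x.2 - y.2) with h₂ | h₂ <;> omega

lemma GridAdj.symm (h : GridAdj x y) : GridAdj y x := by
  simpa only [GridAdj, abs_sub_comm] using h

lemma not_gridAdj_self (x : ℤ × ℤ) : ¬GridAdj x x := by
  simp [GridAdj]

lemma gridAdj_add_right_iff (u : ℤ × ℤ) : GridAdj (x + u) (y + u) ↔ GridAdj x y := by
  simp [GridAdj]

lemma gridAdj_sub_right_iff (u : ℤ × ℤ) : GridAdj (x - u) (y - u) ↔ GridAdj x y := by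
  simp [GridAdj]

lemma gridAdj_zero_sub_iff : GridAdj 0 (y - x) ↔ GridAdj x y := by
  rw [← sub_self x, gridAdj_sub_right_iff]

end GridAdj

section Crossing

/-- The signed crossing of a grid step from `x` to `y` with the upward vertical ray from the origin,
taken just to the left of the axis so that it meets no grid point: `1` if the step crosses it from
left to right, `-1` if from right to left, and `0` otherwise. -/
def rayCrossing (x y : ℤ × ℤ) : ℤ :=
  if 0 < x.2 then (if 0 ≤ y.1 then 1 else 0) - (if 0 ≤ x.1 then 1 else 0) else 0

/-- The signed number of crossings of the first `N` steps of the walk `w` with the upward vertical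
ray from the origin. -/
def crossingNumber (N : ℕ) (w : ℕ → ℤ × ℤ) : ℤ :=
  ∑ i ∈ Finset.range N, rayCrossing (w i) (w (i + 1))

lemma rayCrossing_add_rayCrossing_of_ne_zero {x y e : ℤ × ℤ} (hxy : GridAdj x y)
    (he : GridAdj 0 e) (hx : x ≠ 0) (hy : y ≠ 0) (hxe : x + e ≠ 0) (hye : y + e ≠ 0) :
    rayCrossing x y + rayCrossing y (y + e) =
      rayCrossing x (x + e) + rayCrossing (x + e) (y + e) := by
  obtain ⟨x₁, x₂⟩ := x
  simp only [ne_eq, Prod.ext_iff, Prod.fst_zero, Prod.snd_zero] at hx hy hxe hye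
  rcases gridAdj_iff.1 hxy with rfl | rfl | rfl | rfl <;>
  rcases gridAdj_iff.1 he with rfl | rfl | rfl | rfl <;>
  simp only [rayCrossing, Prod.fst_add, Prod.snd_add, Prod.fst_zero, Prod.snd_zero] at * <;>
  grind

lemma crossingNumber_add_rayCrossing {w : ℕ → ℤ × ℤ} {e : ℤ × ℤ} (N : ℕ)
    (hw : ∀ i < N, GridAdj (w i) (w (i + 1))) (he : GridAdj 0 e)
    (hw₀ : ∀ i ≤ N, w i ≠ 0) (hwe₀ : ∀ i ≤ N, w i + e ≠ 0) :
    crossingNumber N w + rayCrossing (w N) (w N + e) =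
      rayCrossing (w 0) (w 0 + e) + crossingNumber N (fun i ↦ w i + e) := by
  induction N with
  | zero => simp [crossingNumber]
  | succ N ih =>
    have hN := ih (fun i hi ↦ hw i (by lia)) (fun i hi ↦ hw₀ i (by lia))
      (fun i hi ↦ hwe₀ i (by lia))
    have hcell := rayCrossing_add_rayCrossing_of_ne_zero (hw N (by lia)) he
      (hw₀ N (by lia)) (hw₀ (N + 1) le_rfl) (hwe₀ N (by lia)) (hwe₀ (N + 1) le_rfl)
    simp only [crossingNumber, Finset.sum_range_succ] at hN ⊢
    linarith

end Crossing

section Height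

variable {v x y : ℤ × ℤ}

lemma zero_lt_toLex_iff : 0 < toLex x ↔ 0 < x.1 ∨ x.1 = 0 ∧ 0 < x.2 := by
  rw [← toLex_zero, Prod.Lex.toLex_lt_toLex]
  simp [eq_comm]

/-- The height of `x` over the line spanned by `v`, scaled by the length of `v` and positive on the
left of `v`. -/
def height (v x : ℤ × ℤ) : ℤ := v.1 * x.2 - v.2 * x.1

lemma height_sub_sub_self (v x y : ℤ × ℤ) : height v (x - y - v) = height v x - height v y := by
  simp only [height, Prod.fst_sub, Prod.snd_sub]
  ring

lemma height_add_nsmul_self (v x : ℤ × ℤ) (k : ℕ) : height v (x + k • v) = height v x := by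
  simp only [height, Prod.fst_add, Prod.snd_add, Prod.smul_fst, Prod.smul_snd, smul_eq_mul,
    ← natCast_zsmul]
  ring

lemma height_of_right_fst_eq_zero (hx : x.1 = 0) : height v x = v.1 * x.2 := by
  simp [height, hx]

lemma height_of_left_fst_eq_zero (hv : v.1 = 0) : height v x = -(v.2 * x.1) := by
  simp [height, hv]

lemma rayCrossing_eq_zero_of_height_nonpos (hv : 0 < toLex v) (hxy : GridAdj x y)
    (hx : height v x ≤ 0) (hy : height v y ≤ 0) : rayCrossing x y = 0 := by
  rcases zero_lt_toLex_iff.1 hv with hv₁ | ⟨hv₁, hv₂⟩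
  · have snd_nonpos {z : ℤ × ℤ} (hz : height v z ≤ 0) (hz₁ : z.1 = 0) : z.2 ≤ 0 := by
      rw [height_of_right_fst_eq_zero hz₁] at hz
      exact nonpos_of_mul_nonpos_right hz hv₁
    grind [rayCrossing, gridAdj_iff]
  · have fst_nonneg {z : ℤ × ℤ} (hz : height v z ≤ 0) : 0 ≤ z.1 := by
      rw [height_of_left_fst_eq_zero hv₁, neg_nonpos] at hz
      exact nonneg_of_mul_nonneg_right hz hv₂
    simp [rayCrossing, fst_nonneg hx, fst_nonneg hy]

lemma rayCrossing_of_height_nonneg (hv : 0 < toLex v) (hxy : GridAdj x y)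
    (hx : 0 ≤ height v x) (hy : 0 ≤ height v y) (hx₀ : x ≠ 0) (hy₀ : y ≠ 0) :
    rayCrossing x y = (if 0 < toLex y then 1 else 0) - (if 0 < toLex x then 1 else 0) := by
  simp only [zero_lt_toLex_iff, rayCrossing]
  rw [ne_eq, Prod.ext_iff, Prod.fst_zero, Prod.snd_zero] at hx₀ hy₀
  rw [gridAdj_iff, Prod.ext_iff, Prod.ext_iff, Prod.ext_iff, Prod.ext_iff] at hxy
  rcases zero_lt_toLex_iff.1 hv with hv₁ | ⟨hv₁, hv₂⟩
  · have snd_nonneg {z : ℤ × ℤ} (hz : 0 ≤ height v z) (hz₁ : z.1 = 0) : 0 ≤ z.2 := by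
      rw [height_of_right_fst_eq_zero hz₁] at hz
      exact nonneg_of_mul_nonneg_right hz hv₁
    have hx₂ := snd_nonneg hx
    have hy₂ := snd_nonneg hy
    grind
  · have fst_nonpos {z : ℤ × ℤ} (hz : 0 ≤ height v z) : z.1 ≤ 0 := by
      rw [height_of_left_fst_eq_zero hv₁, neg_nonneg] at hz
      exact nonpos_of_mul_nonpos_right hz hv₂
    have hx₁ := fst_nonpos hx
    have hy₁ := fst_nonpos hy
    grind

end Height

section ShiftedWalk

variable {γ : ℕ → ℤ × ℤ} {v : ℤ × ℤ} {N : ℕ}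

/-- The walk `γ` from time `s` on, translated so that it starts at `-v`. It is at the origin exactly
when `γ` is at `γ s + v`. -/
def shiftedWalk (γ : ℕ → ℤ × ℤ) (v : ℤ × ℤ) (s r : ℕ) : ℤ × ℤ := γ (s + r) - γ s - v

lemma shiftedWalk_zero (γ : ℕ → ℤ × ℤ) (v : ℤ × ℤ) (s : ℕ) : shiftedWalk γ v s 0 = -v := by
  simp [shiftedWalk]

lemma shiftedWalk_of_add_eq {u : ℤ × ℤ} {s : ℕ} (h : γ (s + N) = γ s + u) :
    shiftedWalk γ v s N = u - v := by
  simp [shiftedWalk, h]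

lemma shiftedWalk_succ (γ : ℕ → ℤ × ℤ) (v : ℤ × ℤ) (s r : ℕ) :
    shiftedWalk γ v s (r + 1) = shiftedWalk γ v (s + 1) r + (γ (s + 1) - γ s) := by
  simp only [shiftedWalk, add_right_comm s 1 r, ← add_assoc s r 1]
  abel

lemma gridAdj_shiftedWalk (hγ : ∀ t, GridAdj (γ t) (γ (t + 1))) (v : ℤ × ℤ) (s r : ℕ) :
    GridAdj (shiftedWalk γ v s r) (shiftedWalk γ v s (r + 1)) := by
  simp only [shiftedWalk, gridAdj_sub_right_iff]
  exact hγ (s + r)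

lemma height_shiftedWalk (γ : ℕ → ℤ × ℤ) (v : ℤ × ℤ) (s r : ℕ) :
    height v (shiftedWalk γ v s r) = height v (γ (s + r)) - height v (γ s) :=
  height_sub_sub_self ..

lemma crossingNumber_shiftedWalk_succ {u : ℤ × ℤ} {s : ℕ}
    (hγ : ∀ t, GridAdj (γ t) (γ (t + 1))) (hper : ∀ t, γ (t + N) = γ t + u)
    (hs : ∀ r ≤ N, shiftedWalk γ v s r ≠ 0) (hs' : ∀ r ≤ N, shiftedWalk γ v (s + 1) r ≠ 0) :
    crossingNumber N (shiftedWalk γ v (s + 1)) = crossingNumber N (shiftedWalk γ v s) := by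
  cases N with
  | zero => simp [crossingNumber]
  | succ M =>
  have hstart : shiftedWalk γ v (s + 1) 0 = shiftedWalk γ v s 0 := by
    rw [shiftedWalk_zero, shiftedWalk_zero]
  have hend : shiftedWalk γ v s (M + 1) = shiftedWalk γ v (s + 1) (M + 1) := by
    rw [shiftedWalk_of_add_eq (hper s), shiftedWalk_of_add_eq (hper (s + 1))]
  have hsweep := crossingNumber_add_rayCrossing M (w := shiftedWalk γ v (s + 1))
    (fun i _ ↦ gridAdj_shiftedWalk hγ v (s + 1) i) (gridAdj_zero_sub_iff.2 (hγ s))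
    (fun i hi ↦ hs' i (by lia))
    (fun i hi ↦ shiftedWalk_succ γ v s i ▸ hs (i + 1) (by lia))
  simp only [← shiftedWalk_succ] at hsweep
  rw [hend, hstart] at hsweep
  simp only [crossingNumber] at hsweep ⊢
  rw [Finset.sum_range_succ, hsweep, Finset.sum_range_succ' _ M, add_comm]

lemma crossingNumber_shiftedWalk_of_height_le {s : ℕ} (hv : 0 < toLex v)
    (hγ : ∀ t, GridAdj (γ t) (γ (t + 1))) (hs : ∀ t, height v (γ t) ≤ height v (γ s)) :
    crossingNumber N (shiftedWalk γ v s) = 0 := by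
  have hbelow (r : ℕ) : height v (shiftedWalk γ v s r) ≤ 0 := by
    rw [height_shiftedWalk]
    exact sub_nonpos.2 (hs _)
  exact Finset.sum_eq_zero fun r _ ↦ rayCrossing_eq_zero_of_height_nonpos hv
    (gridAdj_shiftedWalk hγ v s r) (hbelow r) (hbelow (r + 1))

lemma crossingNumber_shiftedWalk_of_le_height {s : ℕ} (hv : 0 < toLex v)
    (hγ : ∀ t, GridAdj (γ t) (γ (t + 1))) (hs : ∀ t, height v (γ s) ≤ height v (γ t))
    (hs₀ : ∀ r ≤ N, shiftedWalk γ v s r ≠ 0) (hN : 0 < toLex (shiftedWalk γ v s N)) :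
    crossingNumber N (shiftedWalk γ v s) = 1 := by
  have habove (r : ℕ) : 0 ≤ height v (shiftedWalk γ v s r) := by
    rw [height_shiftedWalk]
    exact sub_nonneg.2 (hs _)
  have hstart : ¬0 < toLex (shiftedWalk γ v s 0) := by
    rw [shiftedWalk_zero, toLex_neg, neg_pos]
    exact hv.asymm
  calc crossingNumber N (shiftedWalk γ v s)
    _ = ∑ r ∈ Finset.range N, ((if 0 < toLex (shiftedWalk γ v s (r + 1)) then 1 else 0) -
          (if 0 < toLex (shiftedWalk γ v s r) then 1 else 0)) :=
      Finset.sum_congr rfl fun r hr ↦ by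
        have hr : r < N := Finset.mem_range.1 hr
        exact rayCrossing_of_height_nonneg hv (gridAdj_shiftedWalk hγ v s r) (habove r)
          (habove (r + 1)) (hs₀ r hr.le) (hs₀ (r + 1) hr)
    _ = 1 := by
      rw [Finset.sum_range_sub fun r ↦ if 0 < toLex (shiftedWalk γ v s r) then (1 : ℤ) else 0,
        if_pos hN, if_neg hstart, sub_zero]

lemma exists_lt_forall_le_of_periodic {α : Type*} [LinearOrder α] {f : ℕ → α} {N : ℕ} (hN : N ≠ 0)
    (hf : Function.Periodic f N) : ∃ s < N, ∀ t, f t ≤ f s := by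
  obtain ⟨s, hs, hmax⟩ := Finset.exists_max_image (Finset.range N) f
    (Finset.nonempty_range_iff.2 hN)
  refine ⟨s, Finset.mem_range.1 hs, fun t ↦ ?_⟩
  rw [← hf.map_mod_nat t]
  exact hmax _ (Finset.mem_range.2 (Nat.mod_lt t (Nat.pos_of_ne_zero hN)))

theorem exists_add_eq_of_quasiperiodic_walk {k : ℕ} (hk : k ≠ 0) (hv : 0 < toLex v) (hN : N ≠ 0)
    (hγ : ∀ t, GridAdj (γ t) (γ (t + 1))) (hper : ∀ t, γ (t + N) = γ t + k • v) :
    ∃ s < N, ∃ r ≤ N, γ (s + r) = γ s + v := by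
  by_contra! hchord
  have havoid (s : ℕ) (hs : s < N) (r : ℕ) (hr : r ≤ N) : shiftedWalk γ v s r ≠ 0 := by
    rw [shiftedWalk, sub_sub, sub_ne_zero]
    exact hchord s hs r hr
  have hconst (s : ℕ) (hs : s < N) :
      crossingNumber N (shiftedWalk γ v s) = crossingNumber N (shiftedWalk γ v 0) := by
    induction s with
    | zero => rfl
    | succ s ih =>
      rw [crossingNumber_shiftedWalk_succ hγ hper (havoid s (by lia)) (havoid (s + 1) hs),
        ih (by lia)]
  have hheight : Function.Periodic (fun t ↦ height v (γ t)) N := fun t ↦ by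
    simp only [hper, height_add_nsmul_self]
  obtain ⟨top, htop, hmax⟩ := exists_lt_forall_le_of_periodic hN hheight
  obtain ⟨bot, hbot, hmin⟩ := exists_lt_forall_le_of_periodic (α := ℤᵒᵈ) hN hheight
  have hend : 0 < toLex (shiftedWalk γ v bot N) := by
    have hne := havoid bot hbot N le_rfl
    obtain ⟨j, rfl⟩ := Nat.exists_eq_succ_of_ne_zero hk
    rw [shiftedWalk_of_add_eq (hper bot), succ_nsmul, add_sub_cancel_right] at hne ⊢
    exact nsmul_pos hv (fun hj ↦ hne (by rw [hj, zero_smul]))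
  have hzero := crossingNumber_shiftedWalk_of_height_le (N := N) hv hγ hmax
  have hone := crossingNumber_shiftedWalk_of_le_height hv hγ hmin (havoid bot hbot) hend
  rw [hconst top htop] at hzero
  rw [hconst bot hbot, hzero] at hone
  exact zero_ne_one hone

end ShiftedWalk

section Chord

lemma exists_quasiperiodic_extension {w : ℕ → ℤ × ℤ} {N : ℕ} {u : ℤ × ℤ} (hN : N ≠ 0)
    (hw : ∀ i < N, GridAdj (w i) (w (i + 1))) (hu : w N = w 0 + u) :
    ∃ γ : ℕ → ℤ × ℤ, (∀ i ≤ N, γ i = w i) ∧ (∀ t, γ (t + N) = γ t + u) ∧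
      ∀ t, GridAdj (γ t) (γ (t + 1)) := by
  have hN₀ : 0 < N := Nat.pos_of_ne_zero hN
  let γ (t : ℕ) : ℤ × ℤ := w (t % N) + (t / N) • u
  have hext (i : ℕ) (hi : i ≤ N) : γ i = w i := by
    rcases hi.lt_or_eq with hi | rfl
    · simp [γ, Nat.mod_eq_of_lt hi, Nat.div_eq_of_lt hi]
    · simp [γ, Nat.div_self hN₀, hu]
  have hper (t : ℕ) : γ (t + N) = γ t + u := by
    simp only [γ, Nat.add_mod_right, Nat.add_div_right t hN₀, succ_nsmul, add_assoc]
  refine ⟨γ, hext, hper, fun t ↦ ?_⟩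
  induction t using Nat.strong_induction_on with
  | _ t ih =>
    rcases lt_or_ge t N with ht | ht
    · rw [hext t ht.le, hext (t + 1) ht]
      exact hw t ht
    · obtain ⟨t, rfl⟩ := Nat.exists_eq_add_of_le' ht
      rw [add_right_comm, hper, hper, gridAdj_add_right_iff]
      exact ih t (by lia)

/-- The subgraph of the grid induced by `C`, on the full vertex set `ℤ × ℤ`, so that reachability in
it is the relation in the definition of `GridConnected`. -/
def gridGraphOn (C : Set (ℤ × ℤ)) : SimpleGraph (ℤ × ℤ) where
  Adj a b := GridAdj a b ∧ a ∈ C ∧ b ∈ C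
  symm := ⟨fun _ _ h ↦ ⟨h.1.symm, h.2.2, h.2.1⟩⟩
  loopless := ⟨fun a h ↦ not_gridAdj_self a h.1⟩

variable {C : Set (ℤ × ℤ)} {p v : ℤ × ℤ}

lemma GridConnected.exists_walk (hC : GridConnected C) {q : ℤ × ℤ} (hp : p ∈ C) (hq : q ∈ C) :
    ∃ (N : ℕ) (w : ℕ → ℤ × ℤ), w 0 = p ∧ w N = q ∧ (∀ i ≤ N, w i ∈ C) ∧
      ∀ i < N, GridAdj (w i) (w (i + 1)) := by
  obtain ⟨W⟩ := ((gridGraphOn C).reachable_iff_reflTransGen p q).2 (hC p hp q hq)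
  refine ⟨W.length, W.getVert, W.getVert_zero, W.getVert_length, fun i hi ↦ ?_,
    fun i hi ↦ (W.adj_getVert_succ hi).1⟩
  rcases hi.lt_or_eq with hi | rfl
  · exact (W.adj_getVert_succ hi).2.1
  · rwa [W.getVert_length]

lemma GridConnected.exists_add_mem_or_add_nsmul_mem (hC : GridConnected C) (hv : 0 < toLex v)
    {k : ℕ} (hp : p ∈ C) (hq : p + (k + 2) • v ∈ C) :
    (∃ a ∈ C, a + v ∈ C) ∨ ∃ a ∈ C, a + (k + 1) • v ∈ C := by
  obtain ⟨N, w, rfl, hwN, hwC, hw⟩ := hC.exists_walk hp hq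
  have hN : N ≠ 0 := by
    rintro rfl
    have hpos : 0 < toLex ((k + 2) • v) := nsmul_pos hv (by lia)
    exact hpos.ne' (left_eq_add.1 hwN)
  obtain ⟨γ, hγw, hper, hγ⟩ := exists_quasiperiodic_extension hN hw hwN
  obtain ⟨s, hs, r, hr, hchord⟩ := exists_add_eq_of_quasiperiodic_walk (by lia) hv hN hγ hper
  rw [hγw s hs.le] at hchord
  rcases le_or_gt (s + r) N with hsr | hsr
  · left
    exact ⟨w s, hwC s hs.le, by rw [← hchord, hγw _ hsr]; exact hwC _ hsr⟩
  · right
    obtain ⟨t, ht⟩ := Nat.exists_eq_add_of_le' hsr.le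
    have htN : t ≤ N := by lia
    have hwrap : w t + (k + 1) • v = w s := by
      rw [ht, hper, hγw t htN, succ_nsmul, ← add_assoc] at hchord
      exact add_right_cancel hchord
    exact ⟨w t, hwC t htN, hwrap ▸ hwC s hs.le⟩

lemma GridConnected.exists_add_mem_of_pos (hC : GridConnected C) (hv : 0 < toLex v) (k : ℕ)
    (hp : p ∈ C) (hq : p + (k + 1) • v ∈ C) : ∃ a ∈ C, a + v ∈ C := by
  induction k generalizing p with
  | zero => exact ⟨p, hp, by simpa using hq⟩
  | succ k ih =>
    rcases hC.exists_add_mem_or_add_nsmul_mem hv hp hq with hchord | ⟨a, ha, hak⟩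
    · exact hchord
    · exact ih ha hak

theorem GridConnected.exists_add_mem_of_add_nsmul_mem (hC : GridConnected C) {n : ℕ} (hn : n ≠ 0)
    (hp : p ∈ C) (hq : p + n • v ∈ C) : ∃ a ∈ C, a + v ∈ C := by
  obtain ⟨k, rfl⟩ := Nat.exists_eq_succ_of_ne_zero hn
  rcases lt_trichotomy 0 (toLex v) with hv | hv | hv
  · exact hC.exists_add_mem_of_pos hv k hp hq
  · obtain rfl : v = 0 := toLex_eq_zero.1 hv.symm
    exact ⟨p, hp, by rwa [add_zero]⟩
  · obtain ⟨a, ha, hav⟩ := hC.exists_add_mem_of_pos (v := -v) (neg_pos.2 hv) k hq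
      (by simpa using hp)
    exact ⟨a + -v, hav, by simpa using ha⟩

lemma add_mem_setTranslate_iff {S : Set (ℤ × ℤ)} {a : ℤ × ℤ} :
    a + v ∈ setTranslate S v ↔ a ∈ S :=
  (add_left_injective v).mem_set_image

theorem GridConnected.add_nsmul_notMem {S : Set (ℤ × ℤ)} (hC : GridConnected C)
    (hCS : C ⊆ setTranslate S v \ S) {n : ℕ} (hn : n ≠ 0) (hp : p ∈ C) : p + n • v ∉ C := by
  intro hq
  obtain ⟨a, ha, hav⟩ := hC.exists_add_mem_of_add_nsmul_mem hn hp hq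
  exact (hCS ha).2 (add_mem_setTranslate_iff.1 (hCS hav).1)

end Chord

theorem jump_leaves_component_general {S₀ S₁ S₂ C : Set (ℤ × ℤ)} {v p : ℤ × ℤ} {n : ℕ}
    (hS₁ : S₁ = setTranslate S₀ v) (hS₂ : S₂ = setTranslate S₁ v)
    (hCS : C ⊆ S₂ \ S₁) (hC : GridConnected C) (hpC : p ∈ C) (hpS₀ : p ∈ S₀)
    (hn : 1 ≤ n) (hnmem : p + n • v ∉ S₁)
    (hmin : ∀ m : ℕ, 1 ≤ m → m < n → p + m • v ∈ S₁) :
    p + n • v ∈ S₂ \ S₁ ∧ p + n • v ∉ C := by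
  subst hS₁ hS₂
  refine ⟨⟨?_, hnmem⟩, hC.add_nsmul_notMem hCS (by lia) hpC⟩
  obtain ⟨m, rfl⟩ := Nat.exists_eq_add_of_le' hn
  rw [succ_nsmul, ← add_assoc] at hnmem ⊢
  have hm : 1 ≤ m := by
    by_contra! hm
    obtain rfl : m = 0 := by lia
    exact hnmem (add_mem_setTranslate_iff.2 (by simpa using hpS₀))
  exact add_mem_setTranslate_iff.2 (hmin m hm m.lt_succ_self)

/-- Let `S₀` be a shape, `S₁ = S₀ + v`, `S₂ = S₁ + v` with `v ≠ 0`. If `C` is a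
connected component of `S₂ \ S₁`, `p ∈ C ∩ S₀`, and `n` is the smallest positive
integer with `p + n • v ∉ S₁`, then `p + n • v ∈ S₂ \ S₁` and `p + n • v ∉ C`. -/
theorem jump_leaves_component (S₀ S₁ S₂ : Set (ℤ × ℤ))
    (hfin : S₀.Finite) (hne : S₀.Nonempty) (hconn : GridConnected S₀)
    (v : ℤ × ℤ) (hv : v ≠ 0)
    (hS₁ : S₁ = setTranslate S₀ v) (hS₂ : S₂ = setTranslate S₁ v)
    (C : Set (ℤ × ℤ)) (hC : IsGridComponent (S₂ \ S₁) C)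
    (p : ℤ × ℤ) (hpC : p ∈ C) (hpS₀ : p ∈ S₀)
    (n : ℕ) (hn : 1 ≤ n) (hnmem : p + n • v ∉ S₁)
    (hmin : ∀ m : ℕ, 1 ≤ m → m < n → p + m • v ∈ S₁) :
    p + n • v ∈ S₂ \ S₁ ∧ p + n • v ∉ C := by
  exact jump_leaves_component_general hS₁ hS₂ hC.1 hC.2.2.1 hpC hpS₀ hn hnmem hmin
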